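/- In any group, if elements a and b satisfy aba = bab and abba = 1, then the subgroup generated by a and b has at most 12 elements; every element of it equals one of 1, c, c², a, ca, c²a, a², ca², c²a², a³, ca³, c²a³ where c = ab⁻¹. -/

import Mathlib

/-!
By `abba = 1` we have `b² = a⁻²`, so `a²` commutes with both generators, while the braid relation
says that `aba` conjugates `a` into `b`. Hence `a² = b²` and `a⁴ = 1`. Then `a` inverts `c = ab⁻¹`,
and the braid relation becomes `c³ = 1`. So `⟨a, b⟩ = ⟨c, a⟩` is the product of the cyclic group
`⟨c⟩`, of order at most `3`, and the cyclic group `⟨a⟩`, of order at most `4`, which normalizes it.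
-/

section ProductOfCyclicSubgroups

open Subgroup
open scoped Pointwise

variable {G : Type*} [Group G] {a c x : G}

theorem mem_normalizer_zpowers_iff :
    a ∈ normalizer (zpowers c : Set G) ↔ zpowers (a * c * a⁻¹) = zpowers c := by
  rw [mem_normalizer_iff_map_conj_eq, MonoidHom.map_zpowers, MonoidHom.coe_coe, MulAut.conj_apply]

theorem mem_normalizer_zpowers_of_semiconjBy_inv (h : SemiconjBy a c c⁻¹) :
    a ∈ normalizer (zpowers c : Set G) := by
  rw [mem_normalizer_zpowers_iff, h.eq, mul_inv_cancel_right, zpowers_inv]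

theorem coe_closure_pair_eq_zpowers_mul_zpowers (h : a ∈ normalizer (zpowers c : Set G)) :
    (closure {c, a} : Set G) = zpowers c * zpowers a := by
  rw [← coe_mul_of_right_le_normalizer_left _ _ (zpowers_le.mpr h), zpowers_eq_closure,
    zpowers_eq_closure, ← Subgroup.closure_union, Set.singleton_union]

theorem natCard_closure_pair_le (h : a ∈ normalizer (zpowers c : Set G)) :
    Nat.card (closure {c, a}) ≤ orderOf c * orderOf a :=
  calc Nat.card (closure {c, a})
      = Nat.card ((zpowers c : Set G) * (zpowers a : Set G) : Set G) :=
        congrArg (fun s : Set G => Nat.card s) (coe_closure_pair_eq_zpowers_mul_zpowers h)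
    _ ≤ Nat.card (zpowers c) * Nat.card (zpowers a) := Set.natCard_mul_le
    _ = orderOf c * orderOf a := by rw [Nat.card_zpowers, Nat.card_zpowers]

theorem exists_lt_pow_eq_of_mem_zpowers {n : ℕ} (hn : 0 < n) (hc : c ^ n = 1)
    (hx : x ∈ zpowers c) : ∃ i < n, c ^ i = x := by
  have hfin : IsOfFinOrder c := isOfFinOrder_iff_pow_eq_one.mpr ⟨n, hn, hc⟩
  obtain ⟨i, rfl⟩ := hfin.mem_powers_iff_mem_zpowers.mpr hx
  exact ⟨i % n, Nat.mod_lt i hn, (pow_eq_pow_mod i hc).symm⟩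

theorem exists_pow_mul_pow_of_mem_closure_pair {m n : ℕ} (hm : 0 < m) (hn : 0 < n)
    (hc : c ^ m = 1) (ha : a ^ n = 1) (h : a ∈ normalizer (zpowers c : Set G))
    (hx : x ∈ closure {c, a}) : ∃ i < m, ∃ j < n, c ^ i * a ^ j = x := by
  rw [← SetLike.mem_coe, coe_closure_pair_eq_zpowers_mul_zpowers h] at hx
  obtain ⟨y, hy, z, hz, rfl⟩ := hx
  obtain ⟨i, hi, rfl⟩ := exists_lt_pow_eq_of_mem_zpowers hm hc hy
  obtain ⟨j, hj, rfl⟩ := exists_lt_pow_eq_of_mem_zpowers hn ha hz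
  exact ⟨i, hi, j, hj, rfl⟩

theorem closure_mul_inv_pair (a b : G) : closure {a * b⁻¹, a} = closure {a, b} := by
  apply le_antisymm <;> rw [closure_le, Set.pair_subset_iff]
  · have ha : a ∈ closure {a, b} := mem_closure_of_mem (Set.mem_insert a {b})
    have hb : b ∈ closure {a, b} := mem_closure_of_mem (Set.mem_insert_of_mem a rfl)
    exact ⟨mul_mem ha (inv_mem hb), ha⟩
  · have hc : a * b⁻¹ ∈ closure {a * b⁻¹, a} := mem_closure_of_mem (Set.mem_insert _ {a})
    have ha : a ∈ closure {a * b⁻¹, a} := mem_closure_of_mem (Set.mem_insert_of_mem _ rfl)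
    exact ⟨ha, by simpa using mul_mem (inv_mem hc) ha⟩

end ProductOfCyclicSubgroups

section BraidRelation

variable {G : Type*} [Group G] {a b : G}

theorem semiconjBy_of_braid (hbraid : a * b * a = b * a * b) : SemiconjBy (a * b * a) a b :=
  calc a * b * a * a = b * a * b * a := by rw [hbraid]
    _ = b * (a * b * a) := by simp only [mul_assoc]

theorem sq_eq_inv_sq_of_mul_eq_one (h : a * b * b * a = 1) : b ^ 2 = (a ^ 2)⁻¹ := by
  calc b ^ 2 = a⁻¹ * (a * b * b * a) * a⁻¹ := by rw [sq]; group
    _ = (a ^ 2)⁻¹ := by rw [h]; group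

theorem sq_eq_sq_of_braid (hbraid : a * b * a = b * a * b) (h : b ^ 2 = (a ^ 2)⁻¹) :
    a ^ 2 = b ^ 2 := by
  have comm_a : Commute (a ^ 2) a := .pow_self a 2
  have comm_b : Commute (a ^ 2) b := by
    rw [← Commute.inv_left_iff, ← h]
    exact .pow_self b 2
  have comm_aba : Commute (a ^ 2) (a * b * a) := (comm_a.mul_right comm_b).mul_right comm_a
  have conj_sq : SemiconjBy (a * b * a) (a ^ 2) (b ^ 2) :=
    (semiconjBy_of_braid hbraid).pow_right 2
  exact mul_right_cancel (comm_aba.eq.trans conj_sq.eq)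

theorem semiconjBy_mul_inv_inv_of_sq_eq_sq (hsq : a ^ 2 = b ^ 2) :
    SemiconjBy a (a * b⁻¹) (a * b⁻¹)⁻¹ :=
  calc a * (a * b⁻¹) = a ^ 2 * b⁻¹ := by rw [sq, mul_assoc]
    _ = b ^ 2 * b⁻¹ := by rw [hsq]
    _ = (a * b⁻¹)⁻¹ * a := by group

theorem mul_inv_pow_three_eq_one_of_braid (hbraid : a * b * a = b * a * b)
    (hsq : a ^ 2 = b ^ 2) : (a * b⁻¹) ^ 3 = 1 := by
  have conj_eq : b⁻¹ * a * b = a * b * a⁻¹ :=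
    calc b⁻¹ * a * b = b⁻¹ * (a * b * a) * a⁻¹ := by group
      _ = b⁻¹ * (b * a * b) * a⁻¹ := by rw [hbraid]
      _ = a * b * a⁻¹ := by group
  have sq_eq_inv : (a * b⁻¹) ^ 2 = (a * b⁻¹)⁻¹ :=
    calc (a * b⁻¹) ^ 2 = a * (b⁻¹ * a * b) * (b ^ 2)⁻¹ := by rw [sq, sq]; group
      _ = a * (a * b * a⁻¹) * (a ^ 2)⁻¹ := by rw [conj_eq, hsq]
      _ = a ^ 2 * b * (a ^ 3)⁻¹ := by rw [sq a]; group
      _ = b * a ^ 2 * (a ^ 3)⁻¹ := by rw [hsq, ← pow_succ, ← pow_succ']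
      _ = (a * b⁻¹)⁻¹ := by group
  rw [pow_succ, sq_eq_inv, inv_mul_cancel]

end BraidRelation

/-- In any group, if `aba = bab` and `abba = 1`, then the subgroup generated by `a`
and `b` has at most 12 elements; every element of it equals one of
`1, c, c², a, ca, c²a, a², ca², c²a², a³, ca³, c²a³` where `c = ab⁻¹`. -/
theorem closure_card_le_twelve {H : Type*} [Group H] (a b : H)
    (h1 : a * b * a = b * a * b) (h2 : a * b * b * a = 1) :
    Nat.card (Subgroup.closure ({a, b} : Set H)) ≤ 12 ∧
      ∀ g ∈ Subgroup.closure ({a, b} : Set H),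
        g ∈ ({1, a * b⁻¹, (a * b⁻¹) ^ 2,
              a, (a * b⁻¹) * a, (a * b⁻¹) ^ 2 * a,
              a ^ 2, (a * b⁻¹) * a ^ 2, (a * b⁻¹) ^ 2 * a ^ 2,
              a ^ 3, (a * b⁻¹) * a ^ 3, (a * b⁻¹) ^ 2 * a ^ 3} : Set H) := by
  have hinv : b ^ 2 = (a ^ 2)⁻¹ := sq_eq_inv_sq_of_mul_eq_one h2
  have hsq : a ^ 2 = b ^ 2 := sq_eq_sq_of_braid h1 hinv
  have ha : a ^ 4 = 1 := by
    rw [pow_add a 2 2, mul_eq_one_iff_eq_inv, ← hinv, hsq]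
  have hc : (a * b⁻¹) ^ 3 = 1 := mul_inv_pow_three_eq_one_of_braid h1 hsq
  have hnorm : a ∈ Subgroup.normalizer (Subgroup.zpowers (a * b⁻¹) : Set H) :=
    mem_normalizer_zpowers_of_semiconjBy_inv (semiconjBy_mul_inv_inv_of_sq_eq_sq hsq)
  rw [← closure_mul_inv_pair]
  constructor
  · calc Nat.card (Subgroup.closure {a * b⁻¹, a})
        ≤ orderOf (a * b⁻¹) * orderOf a := natCard_closure_pair_le hnorm
      _ ≤ 3 * 4 := Nat.mul_le_mul (orderOf_le_of_pow_eq_one three_pos hc)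
          (orderOf_le_of_pow_eq_one four_pos ha)
  · intro g hg
    obtain ⟨i, hi, j, hj, rfl⟩ :=
      exists_pow_mul_pow_of_mem_closure_pair three_pos four_pos hc ha hnorm hg
    interval_cases i <;> interval_cases j <;> simp
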